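/- The optimal function μ for the exponential radial Sobolev inequality satisfies the asymptotic expansions: as j → ∞, 1/μ(j) = 4 j e^{1−2γ−j} (1 − j^{−1} − (1/2) j^{−2} − (5/6) j^{−3} − (43/24) j^{−4} − (529/120) j^{−5} + O(j^{−6})); and as j → 0+, μ(j) = j²/16 + O(j³). Here γ is the Euler–Mascheroni constant. -/

import Mathlib

open MeasureTheory Real Filter Set

noncomputable section

/-- Admissible competitors for `μ(j)`: functions on `[1,∞)` (modeled as
differentiable on `[1,∞)`) with unit exterior kinetic energy,
`2 u(1)² = j` and finite mass. -/
def AdmMu (j : ℝ) (u : ℝ → ℝ) : Prop :=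
  (∀ r ∈ Ici (1 : ℝ), DifferentiableAt ℝ u r) ∧
  (∫ r in Ioi (1 : ℝ), (deriv u r) ^ 2 * r) = 1 ∧
  2 * (u 1) ^ 2 = j ∧
  IntegrableOn (fun r => (u r) ^ 2 * r) (Ioi (1 : ℝ))

/-- The set of masses of admissible competitors. -/
def muSet (j : ℝ) : Set ℝ :=
  {m | ∃ u : ℝ → ℝ, AdmMu j u ∧ m = ∫ r in Ioi (1 : ℝ), (u r) ^ 2 * r}

/-- The optimal function `μ(j)` for the exponential radial Sobolev
inequality. -/
def mu (j : ℝ) : ℝ := sInf (muSet j)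

open scoped Topology

/-- weight -/
def wt (s : ℝ) : ℝ := s + s⁻¹ ^ 3

def EE (y s : ℝ) : ℝ := exp (-s - y / s)

lemma EE_pos (y s : ℝ) : 0 < EE y s := exp_pos _

lemma EE_le_exp {y s : ℝ} (hy : 0 ≤ y) (hs : 0 < s) : EE y s ≤ exp (-s) := by
  unfold EE
  apply exp_le_exp.2
  have : 0 ≤ y / s := by positivity
  linarith

lemma EE_le_pow {y s : ℝ} (n : ℕ) (hy : 0 < y) (hs : 0 < s) :
    EE y s ≤ exp (-s) * (n.factorial * (s / y) ^ n) := by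
  have h := Real.pow_div_factorial_le_exp (y / s) (by positivity) n
  have h2 : EE y s = exp (-s) * (exp (y / s))⁻¹ := by
    unfold EE
    rw [sub_eq_add_neg, exp_add, exp_neg (y / s)]
  rw [h2]
  have h3 : (exp (y / s))⁻¹ ≤ ((y / s) ^ n / n.factorial)⁻¹ := by
    apply inv_anti₀ _ h
    positivity
  have h4 : ((y / s) ^ n / (n.factorial : ℝ))⁻¹ = n.factorial * (s / y) ^ n := by
    rw [inv_div, div_pow, div_pow]
    field_simp
  rw [h4] at h3
  exact mul_le_mul_of_nonneg_left h3 (exp_pos _).le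

lemma EE_anti {y z s : ℝ} (hyz : y ≤ z) (hs : 0 < s) : EE z s ≤ EE y s := by
  unfold EE
  apply exp_le_exp.2
  have : y / s ≤ z / s := by gcongr
  linarith

lemma wt_pos {s : ℝ} (hs : 0 < s) : 0 < wt s := by unfold wt; positivity

lemma EE_wt {y s : ℝ} (hy : 0 < y) (hs : 0 < s) :
    EE y s * wt s ≤ (1 + 24 / y ^ 4) * (exp (-s) * s) := by
  have h1 := EE_le_exp hy.le hs
  have h2 := EE_le_pow 4 hy hs
  have h3 : EE y s * s⁻¹ ^ 3 ≤ 24 / y ^ 4 * (exp (-s) * s) := by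
    calc EE y s * s⁻¹ ^ 3 ≤ exp (-s) * ((Nat.factorial 4 : ℕ) * (s / y) ^ 4) * s⁻¹ ^ 3 := by gcongr
      _ = _ := by
        simp only [Nat.factorial]
        push_cast
        field_simp
  have h4 : EE y s * s ≤ exp (-s) * s := by gcongr
  unfold wt
  nlinarith

lemma int_gam (p : ℝ) (hp : -1 < p) : IntegrableOn (fun s : ℝ => exp (-s) * s ^ p) (Ioi 0) := by
  have := Real.GammaIntegral_convergent (s := p + 1) (by linarith)
  simpa using this

lemma int_exp_mul : IntegrableOn (fun s : ℝ => exp (-s) * s) (Ioi 0) := by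
  simpa using int_gam 1 (by norm_num)

lemma EE_cont (y : ℝ) : ContinuousOn (EE y) (Ioi 0) := by
  unfold EE
  apply ContinuousOn.rexp
  apply ContinuousOn.sub (by fun_prop)
  apply ContinuousOn.div (by fun_prop) (by fun_prop)
  intro x hx; exact (ne_of_gt hx)

lemma EE_int {y : ℝ} (hy : 0 < y) {f : ℝ → ℝ} (hf : ContinuousOn f (Ioi 0)) {C : ℝ}
    (hC : ∀ s, 0 < s → |f s| ≤ C * wt s) :
    IntegrableOn (fun s => EE y s * f s) (Ioi 0) := by
  have hb := (int_exp_mul.const_mul (|C| * (1 + 24 / y ^ 4)))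
  refine Integrable.mono' hb ?_ ?_
  · exact ((EE_cont y).mul hf).aestronglyMeasurable measurableSet_Ioi
  · refine (ae_restrict_iff' measurableSet_Ioi).2 (Eventually.of_forall fun s hs => ?_)
    have hs : 0 < s := hs
    rw [norm_mul, Real.norm_eq_abs, Real.norm_eq_abs, abs_of_pos (EE_pos y s)]
    calc EE y s * |f s| ≤ EE y s * (|C| * wt s) := by
          apply mul_le_mul_of_nonneg_left _ (EE_pos y s).le
          exact (hC s hs).trans (mul_le_mul_of_nonneg_right (le_abs_self C) (wt_pos hs).le)
      _ = |C| * (EE y s * wt s) := by ring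
      _ ≤ |C| * ((1 + 24 / y ^ 4) * (exp (-s) * s)) :=
          mul_le_mul_of_nonneg_left (EE_wt hy hs) (abs_nonneg _)
      _ = _ := by ring

lemma EE_lim {y : ℝ} (hy : 0 < y) {f : ℝ → ℝ} {C : ℝ}
    (hC : ∀ s, 0 < s → |f s| ≤ C * wt s) :
    Tendsto (fun s => EE y s * f s) (𝓝[>] 0) (𝓝 0) ∧
    Tendsto (fun s => EE y s * f s) atTop (𝓝 0) := by
  have key : ∀ s, 0 < s → ‖EE y s * f s‖ ≤ (|C| * (1 + 24 / y ^ 4)) * (s * exp (-s)) := by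
    intro s hs
    rw [norm_mul, Real.norm_eq_abs, Real.norm_eq_abs, abs_of_pos (EE_pos y s)]
    calc EE y s * |f s| ≤ EE y s * (|C| * wt s) := by
          apply mul_le_mul_of_nonneg_left _ (EE_pos y s).le
          exact (hC s hs).trans (mul_le_mul_of_nonneg_right (le_abs_self C) (wt_pos hs).le)
      _ = |C| * (EE y s * wt s) := by ring
      _ ≤ |C| * ((1 + 24 / y ^ 4) * (exp (-s) * s)) :=
          mul_le_mul_of_nonneg_left (EE_wt hy hs) (abs_nonneg _)
      _ = _ := by ring
  constructor
  · refine squeeze_zero_norm' (a := fun s => (|C| * (1 + 24 / y ^ 4)) * (s * exp (-s))) ?_ ?_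
    · filter_upwards [self_mem_nhdsWithin] with s hs using key s hs
    · have : Continuous (fun s : ℝ => (|C| * (1 + 24 / y ^ 4)) * (s * exp (-s))) := by fun_prop
      have h := this.tendsto 0
      simp only [zero_mul, mul_zero] at h
      exact h.mono_left nhdsWithin_le_nhds
  · refine squeeze_zero_norm' (a := fun s => (|C| * (1 + 24 / y ^ 4)) * (s * exp (-s))) ?_ ?_
    · filter_upwards [eventually_gt_atTop 0] with s hs using key s hs
    · have := (Real.tendsto_pow_mul_exp_neg_atTop_nhds_zero 1).const_mul (|C| * (1 + 24 / y ^ 4))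
      simpa using this

lemma EE_deriv_s (y : ℝ) {s : ℝ} (hs : 0 < s) :
    HasDerivAt (EE y) (EE y s * (-1 + y / s ^ 2)) s := by
  unfold EE
  have h : HasDerivAt (fun s : ℝ => -s - y / s) (-1 + y / s ^ 2) s := by
    have := ((hasDerivAt_id s).neg).sub ((hasDerivAt_inv hs.ne').const_mul y)
    refine (this.congr_deriv ?_)
    ring
  exact h.exp

lemma EE_ftc {y : ℝ} (hy : 0 < y) {f f' : ℝ → ℝ} (hf : ∀ s, 0 < s → HasDerivAt f (f' s) s)
    (hc : ContinuousOn f' (Ioi 0)) {C D : ℝ}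
    (hC : ∀ s, 0 < s → |f s| ≤ C * wt s)
    (hD : ∀ s, 0 < s → |f' s - f s + y * (f s / s ^ 2)| ≤ D * wt s) :
    ∫ s in Ioi 0, EE y s * (f' s - f s + y * (f s / s ^ 2)) = 0 := by
  obtain ⟨l0, l1⟩ := EE_lim hy hC
  have hfc : ContinuousOn f (Ioi 0) := fun s hs => (hf s hs).continuousAt.continuousWithinAt
  have hint := EE_int hy (f := fun s => f' s - f s + y * (f s / s ^ 2)) (by
    refine (hc.sub hfc).add (continuousOn_const.mul (hfc.div (by fun_prop) ?_))
    intro x hx; exact pow_ne_zero _ (ne_of_gt hx)) hD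
  set F := Function.update (fun s => EE y s * f s) 0 0 with hF
  have h := integral_Ioi_of_hasDerivAt_of_tendsto (f := F) (a := 0) (m := 0)
    (f' := fun s => EE y s * (f' s - f s + y * (f s / s ^ 2))) ?_ ?_ hint ?_
  · rw [h, hF]; simp
  · rw [hF, continuousWithinAt_update_same]
    simpa using l0
  · intro s hs
    have hs : 0 < s := hs
    have h1 := (EE_deriv_s y hs).mul (hf s hs)
    have h2 : HasDerivAt (fun s => EE y s * f s) (EE y s * (f' s - f s + y * (f s / s ^ 2))) s := by
      refine h1.congr_deriv ?_
      ring
    refine h2.congr_of_eventuallyEq ?_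
    filter_upwards [lt_mem_nhds hs] with t ht
    rw [hF, Function.update_of_ne (ne_of_gt ht)]
  · refine l1.congr' ?_
    filter_upwards [eventually_gt_atTop 0] with t ht
    rw [hF, Function.update_of_ne (ne_of_gt ht)]

lemma EE_deriv_y {y : ℝ} (hy : 0 < y) {f : ℝ → ℝ} (hf : ContinuousOn f (Ioi 0)) {C D : ℝ}
    (hC : ∀ s, 0 < s → |f s| ≤ C * wt s) (hD : ∀ s, 0 < s → |f s / s| ≤ D * wt s) :
    HasDerivAt (fun y => ∫ s in Ioi 0, EE y s * f s) (-∫ s in Ioi 0, EE y s * (f s / s)) y := by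
  have hfs : ContinuousOn (fun s => f s / s) (Ioi 0) :=
    hf.div (by fun_prop) (fun x hx => ne_of_gt hx)
  have hbd := (EE_int (y := y / 2) (by positivity) hfs hD).norm
  have := hasDerivAt_integral_of_dominated_loc_of_deriv_le (μ := volume.restrict (Ioi (0:ℝ)))
    (F := fun y s => EE y s * f s) (F' := fun y s => -(EE y s * (f s / s))) (x₀ := y)
    (s := Ioi (y / 2)) (bound := fun s => ‖EE (y / 2) s * (f s / s)‖)
    (Ioi_mem_nhds (by linarith)) ?_ (EE_int hy hf hC) ?_ ?_ hbd ?_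
  · have h := this.2
    rwa [integral_neg] at h
  · exact Eventually.of_forall fun z => ((EE_cont z).mul hf).aestronglyMeasurable measurableSet_Ioi
  · exact ((EE_cont y).mul hfs).neg.aestronglyMeasurable measurableSet_Ioi
  · refine (ae_restrict_iff' measurableSet_Ioi).2 (Eventually.of_forall fun s hs => ?_)
    intro z hz
    rw [norm_neg, norm_mul, norm_mul]
    apply mul_le_mul_of_nonneg_right _ (norm_nonneg _)
    rw [Real.norm_eq_abs, Real.norm_eq_abs, abs_of_pos (EE_pos _ _), abs_of_pos (EE_pos _ _)]
    exact EE_anti (le_of_lt hz) hs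
  · refine (ae_restrict_iff' measurableSet_Ioi).2 (Eventually.of_forall fun s hs => ?_)
    intro z hz
    have hs : 0 < s := hs
    have h1 : HasDerivAt (fun z : ℝ => -s - z / s) (-(1 / s)) z := by
      simpa using ((hasDerivAt_id z).div_const s).const_sub (-s)
    have h2 := (h1.exp).mul_const (f s)
    refine h2.congr_deriv ?_
    simp only [EE]; ring

lemma wt_one {s : ℝ} (hs : 0 < s) : 1 ≤ wt s := by
  unfold wt
  rcases le_total 1 s with h | h
  · have : 0 < s⁻¹ ^ 3 := by positivity
    linarith
  · have : 1 ≤ s⁻¹ ^ 3 := one_le_pow₀ (one_le_inv₀ hs |>.2 h)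
    linarith

lemma wt_id {s : ℝ} (hs : 0 < s) : s ≤ wt s := by
  unfold wt
  have : 0 < s⁻¹ ^ 3 := by positivity
  linarith

lemma wt_inv {s : ℝ} (hs : 0 < s) : s⁻¹ ≤ wt s := by
  have h1 := wt_one hs
  unfold wt at *
  rcases le_total 1 s with h | h
  · have : s⁻¹ ≤ 1 := inv_le_one_of_one_le₀ h
    linarith
  · have h2 : 1 ≤ s⁻¹ := (one_le_inv₀ hs |>.2 h)
    have : s⁻¹ ≤ s⁻¹ ^ 3 := le_self_pow₀ h2 (by norm_num)
    linarith

lemma wt_inv2 {s : ℝ} (hs : 0 < s) : s⁻¹ ^ 2 ≤ wt s := by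
  have h1 := wt_one hs
  unfold wt at *
  rcases le_total 1 s with h | h
  · have : s⁻¹ ^ 2 ≤ 1 := pow_le_one₀ (by positivity) (inv_le_one_of_one_le₀ h)
    linarith
  · have h2 : 1 ≤ s⁻¹ := (one_le_inv₀ hs |>.2 h)
    have : s⁻¹ ^ 2 ≤ s⁻¹ ^ 3 := pow_le_pow_right₀ h2 (by norm_num)
    linarith

lemma abs_log_le' {s : ℝ} (hs : 0 < s) : |log s| ≤ s + s⁻¹ := by
  have h1 := Real.log_le_sub_one_of_pos hs
  have h2 := Real.log_le_sub_one_of_pos (inv_pos.2 hs)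
  rw [Real.log_inv] at h2
  have : 0 < s⁻¹ := by positivity
  rw [abs_le]; constructor <;> linarith

lemma wt_log {s : ℝ} (hs : 0 < s) : |log s| ≤ 2 * wt s := by
  have := abs_log_le' hs
  have := wt_id hs
  have := wt_inv hs
  linarith

lemma wt_log2 {s : ℝ} (hs : 0 < s) : |log s / s ^ 2| ≤ 2 * wt s := by
  have h1 := abs_log_le' hs
  have h2 := wt_inv hs
  have h3 : s⁻¹ ^ 3 ≤ wt s := by unfold wt; linarith
  rw [abs_div, abs_of_pos (by positivity : 0 < s ^ 2)]
  calc |log s| / s ^ 2 ≤ (s + s⁻¹) / s ^ 2 := by gcongr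
    _ = s⁻¹ + s⁻¹ ^ 3 := by field_simp
    _ ≤ _ := by linarith

/-- `x K₁(x)` with `y = x²/4` -/
def aa (y : ℝ) : ℝ := ∫ s in Ioi 0, EE y s * 1
/-- `2 K₀(x)` with `y = x²/4` -/
def bb (y : ℝ) : ℝ := ∫ s in Ioi 0, EE y s * (1 / s)
def cc (y : ℝ) : ℝ := ∫ s in Ioi 0, EE y s * log s

lemma int_a {y : ℝ} (hy : 0 < y) : IntegrableOn (fun s => EE y s * 1) (Ioi 0) :=
  EE_int hy (C := 1) continuousOn_const (fun s hs => by simpa using wt_one hs)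

lemma cont_inv : ContinuousOn (fun s : ℝ => 1 / s) (Ioi 0) :=
  continuousOn_const.div continuousOn_id (fun x hx => ne_of_gt hx)

lemma cont_inv2 : ContinuousOn (fun s : ℝ => 1 / s ^ 2) (Ioi 0) :=
  continuousOn_const.div (by fun_prop) (fun x hx => pow_ne_zero _ (ne_of_gt hx))

lemma cont_log : ContinuousOn log (Ioi (0:ℝ)) :=
  Real.continuousOn_log.mono (fun x hx => ne_of_gt hx)

lemma bd_inv {s : ℝ} (hs : 0 < s) : |1 / s| ≤ 1 * wt s := by
  rw [abs_of_pos (by positivity)]; simpa using wt_inv hs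

lemma bd_inv2 {s : ℝ} (hs : 0 < s) : |1 / s ^ 2| ≤ 1 * wt s := by
  rw [abs_of_pos (by positivity)]; simpa using wt_inv2 hs

lemma int_b {y : ℝ} (hy : 0 < y) : IntegrableOn (fun s => EE y s * (1 / s)) (Ioi 0) :=
  EE_int hy (C := 1) cont_inv (fun s hs => bd_inv hs)

lemma int_c {y : ℝ} (hy : 0 < y) : IntegrableOn (fun s => EE y s * log s) (Ioi 0) :=
  EE_int hy (C := 2) cont_log (fun s hs => wt_log hs)

lemma int_inv2 {y : ℝ} (hy : 0 < y) : IntegrableOn (fun s => EE y s * (1 / s ^ 2)) (Ioi 0) :=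
  EE_int hy (C := 1) cont_inv2 (fun s hs => bd_inv2 hs)

lemma int_s {y : ℝ} (hy : 0 < y) : IntegrableOn (fun s => EE y s * s) (Ioi 0) :=
  EE_int hy (C := 1) continuousOn_id (fun s hs => by rw [abs_of_pos hs]; simpa using wt_id hs)

lemma cont_log2 : ContinuousOn (fun s : ℝ => log s / s ^ 2) (Ioi 0) :=
  cont_log.div (by fun_prop) (fun x hx => pow_ne_zero _ (ne_of_gt hx))

lemma int_log2 {y : ℝ} (hy : 0 < y) :
    IntegrableOn (fun s => EE y s * (log s / s ^ 2)) (Ioi 0) :=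
  EE_int hy (C := 2) cont_log2 (fun s hs => wt_log2 hs)

lemma int_EE_inv2 {y : ℝ} (hy : 0 < y) :
    y * ∫ s in Ioi 0, EE y s * (1 / s ^ 2) = aa y := by
  have h := EE_ftc hy (f := fun _ => 1) (f' := fun _ => 0) (C := 1) (D := 1 + y)
    (fun s _ => hasDerivAt_const s _) continuousOn_const (fun s hs => by simpa using wt_one hs)
    (fun s hs => by
      have h1 := wt_one hs
      have h2 := bd_inv2 hs
      rw [abs_le] at *
      constructor <;> nlinarith)
  have h2 : (fun s => EE y s * (0 - 1 + y * (1 / s ^ 2)))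
      = fun s => y * (EE y s * (1 / s ^ 2)) - EE y s * 1 := by
    ext s; ring
  rw [h2, integral_sub ((int_inv2 hy).const_mul y) (int_a hy), integral_const_mul] at h
  unfold aa
  linarith

lemma int_EE_s {y : ℝ} (hy : 0 < y) :
    ∫ s in Ioi 0, EE y s * s = aa y + y * bb y := by
  have h := EE_ftc hy (f := fun s => s) (f' := fun _ => 1) (C := 1) (D := 2 + y)
    (fun s _ => hasDerivAt_id s) continuousOn_const
    (fun s hs => by rw [abs_of_pos hs]; simpa using wt_id hs)
    (fun s hs => by
      have h1 := wt_one hs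
      have h2 := wt_inv hs
      have h3 := wt_id hs
      have h4 : s / s ^ 2 = s⁻¹ := by field_simp
      have h5 : 0 < s⁻¹ := by positivity
      rw [h4]
      rw [abs_le] at *
      constructor <;> nlinarith)
  have h2 : ∫ s in Ioi 0, EE y s * (1 - s + y * (s / s ^ 2))
      = ∫ s in Ioi 0, (EE y s * 1 - EE y s * s + y * (EE y s * (1 / s))) := by
    apply setIntegral_congr_fun measurableSet_Ioi
    intro s hs
    have hs : 0 < s := hs
    have h4 : s / s ^ 2 = 1 / s := by field_simp
    simp only [h4]
    ring
  rw [h2, integral_add (((int_a hy)).fun_sub (int_s hy)) ((int_b hy).const_mul y),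
    integral_sub (int_a hy) (int_s hy), integral_const_mul] at h
  unfold aa bb
  linarith

lemma int_EE_log {y : ℝ} (hy : 0 < y) :
    bb y = cc y - y * ∫ s in Ioi 0, EE y s * (log s / s ^ 2) := by
  have h := EE_ftc hy (f := log) (f' := fun s => 1 / s) (C := 2) (D := 3 + 2 * y)
    (fun s hs => by simpa using Real.hasDerivAt_log (ne_of_gt hs)) cont_inv
    (fun s hs => wt_log hs)
    (fun s hs => by
      have h1 := bd_inv hs
      have h2 := wt_log hs
      have h3 := wt_log2 hs
      rw [abs_le] at *
      constructor <;> nlinarith)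
  have h2 : (fun s => EE y s * (1 / s - log s + y * (log s / s ^ 2)))
      = fun s => EE y s * (1 / s) - EE y s * log s + y * (EE y s * (log s / s ^ 2)) := by
    ext s; ring
  rw [h2, integral_add (((int_b hy)).fun_sub (int_c hy)) ((int_log2 hy).const_mul y),
    integral_sub (int_b hy) (int_c hy), integral_const_mul] at h
  unfold cc bb
  linarith

lemma subst_inv {y : ℝ} (hy : 0 < y) (g : ℝ → ℝ) :
    ∫ s in Ioi 0, (y / s ^ 2) * g (y / s) = ∫ s in Ioi 0, g s := by
  have h1 := integral_comp_rpow_Ioi (fun s => y * g (y * s)) (p := -1) (by norm_num)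
  have h2 := integral_comp_mul_left_Ioi g 0 hy
  rw [integral_const_mul, h2] at h1
  simp only [smul_eq_mul, mul_zero] at h1
  rw [← mul_assoc, mul_inv_cancel₀ hy.ne', one_mul] at h1
  rw [← h1]
  apply setIntegral_congr_fun measurableSet_Ioi
  intro s hs
  have hs : 0 < s := hs
  have e1 : s ^ (-1 - 1 : ℝ) = (s ^ 2)⁻¹ := by
    rw [show (-1 - 1 : ℝ) = -((2 : ℕ) : ℝ) by norm_num, Real.rpow_neg hs.le, Real.rpow_natCast]
  have e2 : s ^ (-1 : ℝ) = s⁻¹ := by rw [Real.rpow_neg_one]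
  simp only [e1, e2, abs_neg, abs_one, one_mul]
  rw [div_eq_mul_inv, div_eq_mul_inv]; ring

lemma bb_eq {y : ℝ} (hy : 0 < y) : bb y = -log y * aa y + 2 * cc y := by
  have h := int_EE_log hy
  have h1 := subst_inv hy (fun s => EE y s * log (y / s))
  have h2 : ∫ s in Ioi 0, (y / s ^ 2) * (EE y (y / s) * log (y / (y / s)))
      = y * ∫ s in Ioi 0, EE y s * (log s / s ^ 2) := by
    rw [← integral_const_mul]
    apply setIntegral_congr_fun measurableSet_Ioi
    intro s hs
    have hs : 0 < s := hs
    have e1 : y / (y / s) = s := by field_simp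
    have e2 : EE y (y / s) = EE y s := by
      unfold EE
      rw [e1]; congr 1; ring
    simp only [e1, e2]; ring
  have h3 : ∫ s in Ioi 0, EE y s * log (y / s) = log y * aa y - cc y := by
    unfold aa cc
    rw [← integral_const_mul, ← integral_sub ((int_a hy).const_mul _) (int_c hy)]
    apply setIntegral_congr_fun measurableSet_Ioi
    intro s hs
    have hs : 0 < s := hs
    simp only [Real.log_div hy.ne' hs.ne']; ring
  rw [h2, h3] at h1
  linarith

lemma aa_deriv {y : ℝ} (hy : 0 < y) : HasDerivAt aa (-bb y) y :=
  EE_deriv_y hy (f := fun _ => 1) (C := 1) (D := 1) continuousOn_const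
    (fun s hs => by simpa using wt_one hs) (fun s hs => bd_inv hs)

lemma bb_deriv {y : ℝ} (hy : 0 < y) : HasDerivAt bb (-(aa y / y)) y := by
  have h := EE_deriv_y hy (f := fun s => 1 / s) (C := 1) (D := 1) cont_inv
    (fun s hs => bd_inv hs) (fun s hs => by
      have := bd_inv2 hs
      rwa [show 1 / s / s = 1 / s ^ 2 by rw [div_div, sq]])
  have e : ∫ s in Ioi 0, EE y s * (1 / s / s) = aa y / y := by
    rw [← int_EE_inv2 hy, mul_div_cancel_left₀ _ hy.ne']
    congr 1; ext s; rw [div_div, sq]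
  rw [e] at h
  exact h

lemma set_pos {f : ℝ → ℝ} (hf : IntegrableOn f (Ioi 0)) (h : ∀ s, 0 < s → 0 < f s) :
    0 < ∫ s in Ioi 0, f s := by
  rw [setIntegral_pos_iff_support_of_nonneg_ae _ hf]
  · have : Function.support f ∩ Ioi 0 = Ioi 0 := by
      apply inter_eq_right.2
      intro s hs; exact (h s hs).ne'
    rw [this]; simp
  · exact (ae_restrict_iff' measurableSet_Ioi).2 (Eventually.of_forall fun s hs => (h s hs).le)

lemma aa_pos {y : ℝ} (hy : 0 < y) : 0 < aa y :=
  set_pos (int_a hy) (fun s _ => by simpa using EE_pos y s)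

lemma bb_pos {y : ℝ} (hy : 0 < y) : 0 < bb y :=
  set_pos (int_b hy) (fun s hs => mul_pos (EE_pos y s) (by positivity))

lemma FF_nonneg {y : ℝ} (hy : 0 < y) : 0 ≤ y * bb y ^ 2 - aa y ^ 2 + aa y * bb y := by
  have hb := bb_pos hy
  have key : ∀ l : ℝ, 0 ≤ (aa y + y * bb y) - 2 * l * aa y + l ^ 2 * bb y := by
    intro l
    have h : ∫ s in Ioi 0, EE y s * ((s - l) ^ 2 / s)
        = (aa y + y * bb y) - 2 * l * aa y + l ^ 2 * bb y := by
      rw [← int_EE_s hy]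
      unfold aa bb
      rw [← integral_const_mul, ← integral_const_mul,
        ← integral_sub (int_s hy) ((int_a hy).const_mul _),
        ← integral_add (((int_s hy)).fun_sub ((int_a hy).const_mul _)) ((int_b hy).const_mul _)]
      apply setIntegral_congr_fun measurableSet_Ioi
      intro s hs
      have hs : 0 < s := hs
      simp only
      field_simp
      ring
    rw [← h]
    apply setIntegral_nonneg measurableSet_Ioi
    intro s hs
    have hs : 0 < s := hs
    have := EE_pos y s
    positivity
  have h := key (aa y / bb y)
  have h2 := mul_nonneg h hb.le
  have : ((aa y + y * bb y) - 2 * (aa y / bb y) * aa y + (aa y / bb y) ^ 2 * bb y) * bb y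
      = y * bb y ^ 2 - aa y ^ 2 + aa y * bb y := by
    field_simp
    ring
  linarith

lemma aa_le {y : ℝ} (hy : 0 < y) : aa y ≤ 1 / y := by
  have h : aa y ≤ ∫ s in Ioi 0, (1 / y) * (exp (-s) * s) := by
    apply setIntegral_mono_on (int_a hy) (int_exp_mul.const_mul _) measurableSet_Ioi
    intro s hs
    have := EE_le_pow 1 hy hs
    simp at this
    calc EE y s * 1 ≤ _ := by simpa using this
      _ = _ := by ring
  have g : ∫ s in Ioi (0:ℝ), exp (-s) * s = 1 := by
    have := Real.Gamma_eq_integral (s := 2) (by norm_num)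
    rw [Real.Gamma_two] at this
    rw [this]
    apply setIntegral_congr_fun measurableSet_Ioi
    intro s hs
    norm_num
  rw [integral_const_mul, g] at h
  linarith

lemma int_exp_neg0 : ∫ s in Ioi (0:ℝ), exp (-s) = 1 := by
  simpa using integral_exp_neg_Ioi 0

lemma int_exp1 : IntegrableOn (fun s : ℝ => exp (-s)) (Ioi 0) := by
  simpa using int_gam 0 (by norm_num)

lemma bb_le {y : ℝ} (hy : 0 < y) : bb y ≤ 1 / y := by
  have h : bb y ≤ ∫ s in Ioi 0, (1 / y) * exp (-s) := by
    apply setIntegral_mono_on (int_b hy) (int_exp1.const_mul _) measurableSet_Ioi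
    intro s hs
    have hs : 0 < s := hs
    have := EE_le_pow 1 hy hs
    simp at this
    calc EE y s * (1 / s) ≤ (exp (-s) * (s / y)) * (1 / s) := by gcongr
      _ = _ := by field_simp
  rw [integral_const_mul, int_exp_neg0] at h
  linarith

lemma int_log_exp : IntegrableOn (fun s : ℝ => exp (-s) * s ^ (-(1/2) : ℝ) * |log s|) (Ioi 0) := by
  have h1 := (int_gam (1/2) (by norm_num)).const_mul 1
  have h2 := (int_gam (-(3/4)) (by norm_num)).const_mul 4
  refine Integrable.mono' (h1.add h2) ?_ ?_
  · refine ContinuousOn.aestronglyMeasurable ?_ measurableSet_Ioi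
    refine ContinuousOn.mul (ContinuousOn.mul (by fun_prop) ?_) cont_log.abs
    intro x hx
    exact (Real.continuousAt_rpow_const x _ (Or.inl (ne_of_gt hx))).continuousWithinAt
  · refine (ae_restrict_iff' measurableSet_Ioi).2 (Eventually.of_forall fun s hs => ?_)
    have hs : 0 < s := hs
    have hp : 0 < s ^ (-(1/2) : ℝ) := Real.rpow_pos_of_pos hs _
    have hl : |log s| ≤ s + 4 * s ^ (-(1/4) : ℝ) := by
      have g1 := Real.log_le_sub_one_of_pos hs
      have g2 := Real.log_le_rpow_div (inv_pos.2 hs).le (ε := 1/4) (by norm_num)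
      rw [Real.log_inv, Real.inv_rpow hs.le, ← Real.rpow_neg hs.le] at g2
      have : 0 < s ^ (-(1/4) : ℝ) := Real.rpow_pos_of_pos hs _
      rw [abs_le]; constructor
      · linarith
      · linarith
    rw [Real.norm_eq_abs, abs_of_nonneg (by positivity)]
    have e1 : s ^ (-(1/2) : ℝ) * s = s ^ (1/2 : ℝ) := by
      rw [← Real.rpow_add_one hs.ne']; norm_num
    have e2 : s ^ (-(1/2) : ℝ) * s ^ (-(1/4) : ℝ) = s ^ (-(3/4) : ℝ) := by
      rw [← Real.rpow_add hs]; norm_num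
    calc exp (-s) * s ^ (-(1/2) : ℝ) * |log s|
        ≤ exp (-s) * s ^ (-(1/2) : ℝ) * (s + 4 * s ^ (-(1/4) : ℝ)) := by gcongr
      _ = exp (-s) * (s ^ (-(1/2) : ℝ) * s) + 4 * (exp (-s) * (s ^ (-(1/2) : ℝ) * s ^ (-(1/4) : ℝ))) := by ring
      _ = _ := by rw [e1, e2]; simp

lemma EE_diff {y s : ℝ} (hy : 0 < y) (hs : 0 < s) :
    |exp (-s) - EE y s| ≤ √y * (exp (-s) * s ^ (-(1/2) : ℝ)) := by
  have h0 := EE_le_exp hy.le hs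
  have h2 : EE y s = exp (-s) * exp (-(y / s)) := by
    unfold EE
    rw [sub_eq_add_neg, exp_add]
  rw [abs_of_nonneg (by linarith), h2]
  have hw : 0 < y / s := by positivity
  have h3 : 1 - exp (-(y / s)) ≤ √(y / s) := by
    rcases le_total 1 (y / s) with h | h
    · have : 1 ≤ √(y / s) := Real.one_le_sqrt.2 h
      have := exp_pos (-(y / s))
      linarith
    · have h1 := Real.add_one_le_exp (-(y / s))
      have : y / s ≤ √(y / s) := by
        apply Real.le_sqrt_of_sq_le
        nlinarith
      linarith
  have h4 : √(y / s) = √y * s ^ (-(1/2) : ℝ) := by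
    rw [Real.sqrt_div hy.le, Real.rpow_neg hs.le, ← Real.sqrt_eq_rpow, div_eq_mul_inv]
  rw [h4] at h3
  calc exp (-s) - exp (-s) * exp (-(y / s)) = exp (-s) * (1 - exp (-(y / s))) := by ring
    _ ≤ exp (-s) * (√y * s ^ (-(1/2) : ℝ)) := by gcongr
    _ = _ := by ring

lemma int_exp_log : IntegrableOn (fun s : ℝ => exp (-s) * log s) (Ioi 0) ∧
    ∫ s in Ioi (0:ℝ), exp (-s) * log s = -eulerMascheroniConstant := by
  constructor
  · have h1 := (int_gam 1 (by norm_num)).const_mul 1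
    have h2 := (int_gam (-(1/4)) (by norm_num)).const_mul 4
    refine Integrable.mono' (h1.add h2) ?_ ?_
    · refine ContinuousOn.aestronglyMeasurable ?_ measurableSet_Ioi
      exact ContinuousOn.mul (by fun_prop) cont_log
    · refine (ae_restrict_iff' measurableSet_Ioi).2 (Eventually.of_forall fun s hs => ?_)
      have hs : 0 < s := hs
      have hl : |log s| ≤ s + 4 * s ^ (-(1/4) : ℝ) := by
        have g1 := Real.log_le_sub_one_of_pos hs
        have g2 := Real.log_le_rpow_div (inv_pos.2 hs).le (ε := 1/4) (by norm_num)
        rw [Real.log_inv, Real.inv_rpow hs.le, ← Real.rpow_neg hs.le] at g2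
        have : 0 < s ^ (-(1/4) : ℝ) := Real.rpow_pos_of_pos hs _
        rw [abs_le]; constructor
        · linarith
        · linarith
      rw [norm_mul, Real.norm_eq_abs, Real.norm_eq_abs, abs_of_pos (exp_pos _)]
      calc exp (-s) * |log s| ≤ exp (-s) * (s + 4 * s ^ (-(1/4) : ℝ)) := by gcongr
        _ = _ := by simp; ring
  · have h1 := Complex.hasDerivAt_Gamma_one
    have h2 := Complex.hasDerivAt_GammaIntegral (s := 1) (by simp)
    have h3 : Complex.GammaIntegral =ᶠ[𝓝 1] Complex.Gamma := by
      have : {s : ℂ | 0 < s.re} ∈ 𝓝 (1:ℂ) :=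
        (isOpen_lt continuous_const Complex.continuous_re).mem_nhds (by simp)
      filter_upwards [this] with s hs
      exact (Complex.Gamma_eq_integral hs).symm
    have h4 := (h1.congr_of_eventuallyEq h3).unique h2
    have h5 : ∫ t : ℝ in Ioi 0, (t:ℂ) ^ ((1:ℂ) - 1) * (Real.log t * Real.exp (-t))
        = ((∫ s in Ioi (0:ℝ), exp (-s) * log s : ℝ) : ℂ) := by
      rw [← integral_complex_ofReal]
      apply setIntegral_congr_fun measurableSet_Ioi
      intro s hs
      simp
      ring
    rw [h5] at h4
    exact_mod_cast h4.symm

lemma aa_asymp : ∃ C, 0 < C ∧ ∀ y, 0 < y → |aa y - 1| ≤ C * √y := by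
  refine ⟨|∫ s in Ioi (0:ℝ), exp (-s) * s ^ (-(1/2) : ℝ)| + 1, by positivity, fun y hy => ?_⟩
  have h0 := int_gam (-(1/2)) (by norm_num)
  have h1 : 1 - aa y = ∫ s in Ioi (0:ℝ), (exp (-s) - EE y s * 1) := by
    rw [integral_sub int_exp1 (int_a hy), int_exp_neg0]; rfl
  rw [abs_sub_comm, h1]
  have h2 := norm_integral_le_of_norm_le (μ := volume.restrict (Ioi (0:ℝ)))
    (f := fun s => exp (-s) - EE y s * 1) (h0.const_mul (√y)) (by
      refine (ae_restrict_iff' measurableSet_Ioi).2 (Eventually.of_forall fun s hs => ?_)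
      rw [mul_one]
      exact EE_diff hy hs)
  rw [integral_const_mul] at h2
  have h3 := le_abs_self (∫ s in Ioi (0:ℝ), exp (-s) * s ^ (-(1/2) : ℝ))
  have := Real.sqrt_nonneg y
  rw [Real.norm_eq_abs] at h2
  nlinarith

lemma cc_asymp : ∃ C, 0 < C ∧ ∀ y, 0 < y → |cc y + eulerMascheroniConstant| ≤ C * √y := by
  refine ⟨|(∫ s in Ioi (0:ℝ), exp (-s) * s ^ (-(1/2) : ℝ) * |log s|)| + 1, by positivity,
    fun y hy => ?_⟩
  obtain ⟨i1, e1⟩ := int_exp_log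
  have h1 : -(cc y + eulerMascheroniConstant)
      = ∫ s in Ioi (0:ℝ), (exp (-s) * log s - EE y s * log s) := by
    rw [integral_sub i1 (int_c hy), e1]; unfold cc; ring
  rw [← abs_neg, h1]
  have h2 := norm_integral_le_of_norm_le (μ := volume.restrict (Ioi (0:ℝ)))
    (f := fun s => exp (-s) * log s - EE y s * log s) (int_log_exp.const_mul (√y)) (by
      refine (ae_restrict_iff' measurableSet_Ioi).2 (Eventually.of_forall fun s hs => ?_)
      rw [← sub_mul, norm_mul, ← mul_assoc]
      exact mul_le_mul_of_nonneg_right (EE_diff hy hs) (abs_nonneg _))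
  rw [integral_const_mul] at h2
  have h3 := le_abs_self (∫ s in Ioi (0:ℝ), exp (-s) * s ^ (-(1/2) : ℝ) * |log s|)
  have := Real.sqrt_nonneg y
  rw [Real.norm_eq_abs] at h2
  nlinarith


lemma riccati_lower {j C lam : ℝ} {u P P' : ℝ → ℝ} (hC : 0 < C) (hu : AdmMu j u)
    (hP : ∀ r, 1 ≤ r → HasDerivAt P (P' r) r)
    (hric : ∀ r, 1 ≤ r → -lam * r + P r ^ 2 / r ≤ P' r)
    (hPC : ∀ r, 1 ≤ r → P r ≤ C * r) (hlam : 0 ≤ lam) :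
    P 1 * (j / 2) ≤ 1 + lam * ∫ r in Ioi (1 : ℝ), (u r) ^ 2 * r := by
  obtain ⟨hd, hk, hj, hm⟩ := hu
  have hki : IntegrableOn (fun r => (deriv u r) ^ 2 * r) (Ioi (1 : ℝ)) := by
    by_contra h
    rw [integral_undef h] at hk
    norm_num at hk
  set M := ∫ r in Ioi (1 : ℝ), (u r) ^ 2 * r with hM
  have hphi : IntegrableOn (fun r => (deriv u r) ^ 2 * r + lam * ((u r) ^ 2 * r)) (Ioi (1 : ℝ)) :=
    Integrable.fun_add hki (hm.const_mul lam)
  have htot : ∫ r in Ioi (1 : ℝ), ((deriv u r) ^ 2 * r + lam * ((u r) ^ 2 * r)) = 1 + lam * M := by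
    rw [integral_add hki (hm.const_mul lam), hk, integral_const_mul]
  have step : ∀ R, 1 ≤ R → P 1 * (j / 2) - P R * u R ^ 2 ≤ 1 + lam * M := by
    intro R hR
    have hder : ∀ x, 1 ≤ x → HasDerivAt (fun r => -(P r * u r ^ 2))
        (-(P' x * u x ^ 2 + P x * (2 * u x * deriv u x))) x := by
      intro x hx
      have h1 := (hP x hx).mul (((hd x hx).hasDerivAt).pow 2)
      refine (h1.neg).congr_deriv ?_
      simp
    have h := intervalIntegral.sub_le_integral_of_hasDeriv_right_of_le hR
      (g := fun r => -(P r * u r ^ 2))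
      (g' := fun x => -(P' x * u x ^ 2 + P x * (2 * u x * deriv u x)))
      (φ := fun r => (deriv u r) ^ 2 * r + lam * ((u r) ^ 2 * r))
      (fun x hx => (hder x hx.1).continuousAt.continuousWithinAt)
      (fun x hx => (hder x hx.1.le).hasDerivWithinAt)
      ?_ ?_
    · have h2 : ∫ y in (1:ℝ)..R, ((deriv u y) ^ 2 * y + lam * ((u y) ^ 2 * y)) ≤ 1 + lam * M := by
        rw [← htot, intervalIntegral.integral_of_le hR]
        apply setIntegral_mono_set hphi
        · refine (ae_restrict_iff' measurableSet_Ioi).2 (Eventually.of_forall fun s hs => ?_)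
          have hs : (0:ℝ) < s := lt_trans one_pos hs
          simp only [Pi.zero_apply]
          positivity
        · exact Ioc_subset_Ioi_self.eventuallyLE
      have h3 : P 1 * u 1 ^ 2 = P 1 * (j / 2) := by rw [← hj]; ring
      linarith
    · rw [integrableOn_Icc_iff_integrableOn_Ioc]
      exact hphi.mono_set Ioc_subset_Ioi_self
    · intro x hx
      have hx0 : 0 < x := lt_trans one_pos hx.1
      have h1 := hric x hx.1.le
      have h2 : 0 ≤ x * (deriv u x + P x * u x / x) ^ 2 := by positivity
      have h3 : x * (deriv u x + P x * u x / x) ^ 2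
          = deriv u x ^ 2 * x + 2 * P x * u x * deriv u x + (P x ^ 2 / x) * u x ^ 2 := by
        field_simp
        ring
      have h4 := mul_le_mul_of_nonneg_right h1 (sq_nonneg (u x))
      nlinarith
  by_contra hcon
  push Not at hcon
  set ε := P 1 * (j / 2) - (1 + lam * M) with hε
  have hεp : 0 < ε := by linarith
  have hlow : ∀ R, 1 ≤ R → ε / C ≤ u R ^ 2 * R := by
    intro R hR
    have h1 := step R hR
    have h2 := mul_le_mul_of_nonneg_right (hPC R hR) (sq_nonneg (u R))
    rw [div_le_iff₀ hC]
    nlinarith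
  have hci : IntegrableOn (fun _ : ℝ => ε / C) (Ioi (1:ℝ)) := by
    refine Integrable.mono' hm (by fun_prop) ?_
    refine (ae_restrict_iff' measurableSet_Ioi).2 (Eventually.of_forall fun s hs => ?_)
    rw [Real.norm_eq_abs, abs_of_pos (by positivity)]
    exact hlow s (le_of_lt hs)
  rw [integrableOn_const_iff] at hci
  rcases hci with h | h
  · have : 0 < ε / C := by positivity
    exact this.ne' (by simpa using h)
  · simp at h

lemma muSet_bdd (j : ℝ) : BddBelow (muSet j) := by
  refine ⟨0, ?_⟩
  rintro m ⟨u, _, rfl⟩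
  apply setIntegral_nonneg measurableSet_Ioi
  intro s hs
  have hs : (0:ℝ) < s := lt_trans one_pos hs
  positivity

lemma aa_lim : Tendsto aa atTop (𝓝 0) := by
  refine squeeze_zero' (g := fun y => y⁻¹) ?_ ?_ tendsto_inv_atTop_zero
  · filter_upwards [eventually_gt_atTop 0] with y hy using (aa_pos hy).le
  · filter_upwards [eventually_gt_atTop 0] with y hy
    simpa using aa_le hy

lemma bb_lim : Tendsto bb atTop (𝓝 0) := by
  refine squeeze_zero' (g := fun y => y⁻¹) ?_ ?_ tendsto_inv_atTop_zero
  · filter_upwards [eventually_gt_atTop 0] with y hy using (bb_pos hy).le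
  · filter_upwards [eventually_gt_atTop 0] with y hy
    simpa using bb_le hy

lemma ybb_lim : Tendsto (fun y => y * bb y ^ 2) atTop (𝓝 0) := by
  refine squeeze_zero' (g := fun y => y⁻¹) ?_ ?_ tendsto_inv_atTop_zero
  · filter_upwards [eventually_gt_atTop 0] with y hy
    positivity
  · filter_upwards [eventually_gt_atTop 0] with y hy
    have h := bb_le hy
    have h0 := (bb_pos hy).le
    calc y * bb y ^ 2 ≤ y * (1 / y) ^ 2 := by gcongr
      _ = y⁻¹ := by field_simp

def FF (y : ℝ) : ℝ := y * bb y ^ 2 - aa y ^ 2 + aa y * bb y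
def GG (y : ℝ) : ℝ := aa y ^ 2 - y * bb y ^ 2

lemma FF_deriv {y : ℝ} (hy : 0 < y) : HasDerivAt FF (-(aa y ^ 2 / y)) y := by
  have ha := aa_deriv hy
  have hb := bb_deriv hy
  have := (((hasDerivAt_id y).mul (hb.pow 2)).sub (ha.pow 2)).add (ha.mul hb)
  refine this.congr_deriv ?_
  simp
  field_simp
  ring

lemma GG_deriv {y : ℝ} (hy : 0 < y) : HasDerivAt GG (-(bb y ^ 2)) y := by
  have ha := aa_deriv hy
  have hb := bb_deriv hy
  have := (ha.pow 2).sub ((hasDerivAt_id y).mul (hb.pow 2))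
  refine this.congr_deriv ?_
  simp
  field_simp
  ring

lemma FF_lim : Tendsto FF atTop (𝓝 0) := by
  have := (ybb_lim.sub (aa_lim.pow 2)).add (aa_lim.mul bb_lim)
  simp only [ne_eq, OfNat.ofNat_ne_zero, not_false_eq_true, zero_pow, sub_zero, mul_zero,
    add_zero] at this
  exact this

lemma GG_lim : Tendsto GG atTop (𝓝 0) := by
  have := (aa_lim.pow 2).sub ybb_lim
  simp only [ne_eq, OfNat.ofNat_ne_zero, not_false_eq_true, zero_pow, sub_zero] at this
  exact this

lemma sq_deriv (α r : ℝ) : HasDerivAt (fun r => α * r ^ 2) (2 * α * r) r := by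
  refine ((hasDerivAt_pow 2 r).const_mul α).congr_deriv ?_
  simp; ring

lemma sq_lim {α : ℝ} (hα : 0 < α) : Tendsto (fun r : ℝ => α * r ^ 2) atTop atTop :=
  (tendsto_pow_atTop (by norm_num)).const_mul_atTop hα

lemma mu_eq {α j : ℝ} (hα : 0 < α) (hj : 0 < j) (h : FF α * j = bb α ^ 2) :
    mu j = GG α / (4 * α * FF α) := by
  have ha := aa_pos hα
  have hb := bb_pos hα
  have hF : 0 < FF α := by
    have : 0 < FF α * j := by rw [h]; positivity
    exact (mul_pos_iff_of_pos_right hj).1 this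
  have lower : ∀ m ∈ muSet j, GG α / (4 * α * FF α) ≤ m := by
    rintro m ⟨u, hu, rfl⟩
    have key := riccati_lower (u := u) (j := j) (C := 2 + 2 * √α) (lam := 4 * α)
      (P := fun r => 2 * aa (α * r ^ 2) / bb (α * r ^ 2))
      (P' := fun r => -(4 * α) * r + (2 * aa (α * r ^ 2) / bb (α * r ^ 2)) ^ 2 / r)
      (by positivity) hu ?_ (fun r _ => le_rfl) ?_ (by positivity)
    · set M := ∫ r in Ioi (1 : ℝ), (u r) ^ 2 * r
      simp only [one_pow, mul_one] at key
      rw [div_le_iff₀ (by positivity)]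
      have h1 : 2 * aa α / bb α * (j / 2) * FF α = aa α * bb α := by
        have : 2 * aa α / bb α * (j / 2) * FF α = aa α / bb α * (FF α * j) := by ring
        rw [this, h]; field_simp
      have h2 := mul_le_mul_of_nonneg_right key hF.le
      rw [h1] at h2
      have h3 : GG α = aa α * bb α - FF α := by unfold GG FF; ring
      rw [h3]; nlinarith
    · intro r hr
      have hr0 : 0 < r := by linarith
      have hy : 0 < α * r ^ 2 := by positivity
      have hb := bb_pos hy
      have h1 := (aa_deriv hy).comp r (sq_deriv α r)
      have h2 := (bb_deriv hy).comp r (sq_deriv α r)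
      have h3 := ((h1.const_mul 2).div h2 hb.ne')
      refine h3.congr_deriv ?_
      simp only [Function.comp]
      field_simp
      ring
    · intro r hr
      have hr0 : 0 < r := by linarith
      have hy : 0 < α * r ^ 2 := by positivity
      have hb := bb_pos hy
      have ha := aa_pos hy
      have hf := FF_nonneg hy
      have hsq : √α ^ 2 = α := Real.sq_sqrt hα.le
      have hs0 := Real.sqrt_nonneg α
      set A := aa (α * r ^ 2)
      set B := bb (α * r ^ 2)
      rw [div_le_iff₀ hb]
      by_contra hcon
      push Not at hcon
      have h1 : (1 + √α) * r * B < A := by nlinarith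
      have h2 : B ≤ r * B := by nlinarith
      have h3 : √α * r * B < A - B := by nlinarith
      have h4 : (√α * r * B) ^ 2 < (A - B) * A := by
        rw [sq]
        apply mul_lt_mul'' h3 _ (by positivity) (by positivity)
        linarith
      have h5 : (√α * r * B) ^ 2 = α * r ^ 2 * B ^ 2 := by
        rw [mul_pow, mul_pow, hsq]
      nlinarith
  have mem : GG α / (4 * α * FF α) ∈ muSet j := by
    set c := √(1 / (2 * FF α)) with hc
    have hc2 : c ^ 2 = 1 / (2 * FF α) := Real.sq_sqrt (by positivity)
    have hud : ∀ r, 1 ≤ r → HasDerivAt (fun r => c * bb (α * r ^ 2))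
        (-(2 * c * aa (α * r ^ 2) / r)) r := by
      intro r hr
      have hr0 : 0 < r := by linarith
      have hy : 0 < α * r ^ 2 := by positivity
      refine (((bb_deriv hy).comp r (sq_deriv α r)).const_mul c).congr_deriv ?_
      field_simp
    have hFd : ∀ r ∈ Ici (1:ℝ), HasDerivAt (fun r => -(2 * c ^ 2) * FF (α * r ^ 2))
        (4 * c ^ 2 * aa (α * r ^ 2) ^ 2 / r) r := by
      intro r hr
      have hr0 : 0 < r := lt_of_lt_of_le one_pos hr
      have hy : 0 < α * r ^ 2 := by positivity
      refine (((FF_deriv hy).comp r (sq_deriv α r)).const_mul (-(2 * c ^ 2))).congr_deriv ?_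
      field_simp
      ring
    have hGd : ∀ r ∈ Ici (1:ℝ), HasDerivAt (fun r => -(c ^ 2 / (2 * α)) * GG (α * r ^ 2))
        ((c * bb (α * r ^ 2)) ^ 2 * r) r := by
      intro r hr
      have hr0 : 0 < r := lt_of_lt_of_le one_pos hr
      have hy : 0 < α * r ^ 2 := by positivity
      refine (((GG_deriv hy).comp r (sq_deriv α r)).const_mul (-(c ^ 2 / (2 * α)))).congr_deriv ?_
      field_simp
    have hFl : Tendsto (fun r => -(2 * c ^ 2) * FF (α * r ^ 2)) atTop (𝓝 0) := by
      simpa using (FF_lim.comp (sq_lim hα)).const_mul (-(2 * c ^ 2))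
    have hGl : Tendsto (fun r => -(c ^ 2 / (2 * α)) * GG (α * r ^ 2)) atTop (𝓝 0) := by
      simpa using (GG_lim.comp (sq_lim hα)).const_mul (-(c ^ 2 / (2 * α)))
    have hpos1 : ∀ r ∈ Ioi (1:ℝ), 0 ≤ 4 * c ^ 2 * aa (α * r ^ 2) ^ 2 / r := by
      intro r hr
      have hr0 : 0 < r := lt_trans one_pos hr
      positivity
    have hpos2 : ∀ r ∈ Ioi (1:ℝ), 0 ≤ (c * bb (α * r ^ 2)) ^ 2 * r := by
      intro r hr
      have hr0 : 0 < r := lt_trans one_pos hr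
      positivity
    refine ⟨fun r => c * bb (α * r ^ 2), ⟨fun r hr => (hud r hr).differentiableAt, ?_, ?_, ?_⟩, ?_⟩
    · have e := integral_Ioi_of_hasDerivAt_of_nonneg' hFd hpos1 hFl
      have e2 : ∫ r in Ioi (1:ℝ), (deriv (fun r => c * bb (α * r ^ 2)) r) ^ 2 * r
          = ∫ r in Ioi (1:ℝ), 4 * c ^ 2 * aa (α * r ^ 2) ^ 2 / r := by
        apply setIntegral_congr_fun measurableSet_Ioi
        intro r hr
        have hr0 : 0 < r := lt_trans one_pos hr
        simp only [(hud r (le_of_lt hr)).deriv]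
        field_simp
        ring
      rw [e2, e, hc2]
      simp only [one_pow, mul_one]
      field_simp
      ring
    · simp only [one_pow, mul_one]
      rw [mul_pow, hc2, ← h]
      field_simp
    · exact integrableOn_Ioi_deriv_of_nonneg' hGd hpos2 hGl
    · have e := integral_Ioi_of_hasDerivAt_of_nonneg' hGd hpos2 hGl
      rw [e, hc2]
      simp only [one_pow, mul_one]
      field_simp
      ring
  exact le_antisymm (csInf_le (muSet_bdd j) mem) (le_csInf ⟨_, mem⟩ lower)

lemma small_mem {j : ℝ} (hj : 0 < j) (hj1 : j ≤ 1) : 4 * j ^ 2 / (8 - j) ^ 2 ∈ muSet j := by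
  set a := 4 / j - 1 / 2 with ha
  have ha0 : 0 < a := by
    have : 4 ≤ 4 / j := by rw [le_div_iff₀ hj]; linarith
    linarith
  have haj : j * (2 * a + 1) = 8 := by rw [ha]; field_simp; ring
  set c := √(j / 2) with hc
  have hc2 : c ^ 2 = j / 2 := Real.sq_sqrt (by positivity)
  set u : ℝ → ℝ := fun r => c * exp (-a * (r - 1)) with hu
  have hud : ∀ r, HasDerivAt u (-a * u r) r := by
    intro r
    have h1 : HasDerivAt (fun r : ℝ => -a * (r - 1)) (-a) r := by
      simpa using ((hasDerivAt_id r).sub_const 1).const_mul (-a)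
    refine (h1.exp.const_mul c).congr_deriv ?_
    rw [hu]; ring
  have hu2 : ∀ r, u r ^ 2 = c ^ 2 * exp (-(2 * a) * (r - 1)) := by
    intro r
    rw [hu]; simp only; rw [mul_pow, ← Real.exp_nat_mul]; congr 2; push_cast; ring
  have hGd : ∀ r ∈ Ici (1:ℝ), HasDerivAt (fun r => -(r / (2 * a) + 1 / (4 * a ^ 2)) * u r ^ 2)
      (u r ^ 2 * r) r := by
    intro r _
    have h1 := ((((hasDerivAt_id r).div_const (2 * a)).add_const (1 / (4 * a ^ 2))).neg).mul
      ((hud r).pow 2)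
    refine h1.congr_deriv ?_
    simp
    field_simp
    ring
  have hGl : Tendsto (fun r => -(r / (2 * a) + 1 / (4 * a ^ 2)) * u r ^ 2) atTop (𝓝 0) := by
    have t0 : Tendsto (fun r : ℝ => 2 * a * r) atTop atTop :=
      tendsto_id.const_mul_atTop (by positivity)
    have t1 := (Real.tendsto_pow_mul_exp_neg_atTop_nhds_zero 1).comp t0
    have t2 := (Real.tendsto_pow_mul_exp_neg_atTop_nhds_zero 0).comp t0
    have t3 := (t1.add t2).const_mul (-(c ^ 2 * exp (2 * a) / (4 * a ^ 2)))
    simp only [add_zero, mul_zero] at t3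
    refine t3.congr (fun r => ?_)
    rw [hu2]
    have : exp (-(2 * a) * (r - 1)) = exp (2 * a) * exp (-(2 * a * r)) := by
      rw [← exp_add]; congr 1; ring
    rw [this]
    simp only [Function.comp, pow_one, pow_zero]
    field_simp
    ring
  have hpos : ∀ r ∈ Ioi (1:ℝ), 0 ≤ u r ^ 2 * r := by
    intro r hr
    have hr0 : 0 < r := lt_trans one_pos hr
    positivity
  have e := integral_Ioi_of_hasDerivAt_of_nonneg' hGd hpos hGl
  have hu1 : u 1 ^ 2 = j / 2 := by rw [hu2, hc2]; simp
  have e3 : ∫ r in Ioi (1:ℝ), u r ^ 2 * r = 1 / a ^ 2 := by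
    rw [e, hu1]
    field_simp
    linarith
  refine ⟨u, ⟨fun r _ => (hud r).differentiableAt, ?_, by rw [hu1]; ring, ?_⟩, ?_⟩
  · have : (fun r => deriv u r ^ 2 * r) = fun r => a ^ 2 * (u r ^ 2 * r) := by
      ext r; rw [(hud r).deriv]; ring
    rw [this, integral_const_mul, e3]
    field_simp
  · exact integrableOn_Ioi_deriv_of_nonneg' hGd hpos hGl
  · rw [e3]
    have : 8 - j = 2 * a * j := by linarith
    rw [this]; field_simp; ring

lemma part2 : ∃ C : ℝ, 0 < C ∧ ∃ j₁ : ℝ, 0 < j₁ ∧ ∀ j : ℝ, 0 < j → j ≤ j₁ →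
      |mu j - j ^ 2 / 16| ≤ C * j ^ 3 := by
  refine ⟨1, one_pos, 1, one_pos, fun j hj hj1 => ?_⟩
  have mem := small_mem hj hj1
  have up : mu j ≤ 4 * j ^ 2 / (8 - j) ^ 2 := csInf_le (muSet_bdd j) mem
  have lo : j ^ 2 / 16 ≤ mu j := by
    apply le_csInf ⟨_, mem⟩
    rintro m ⟨u, hu, rfl⟩
    have key := riccati_lower (u := u) (j := j) (C := 4 / j) (lam := (4 / j) ^ 2)
      (P := fun r => 4 / j * r) (P' := fun _ => 4 / j) (by positivity) hu
      (fun r _ => by simpa using (hasDerivAt_id r).const_mul (4 / j))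
      (fun r hr => by
        have hr0 : 0 < r := by linarith
        have : -(4 / j) ^ 2 * r + (4 / j * r) ^ 2 / r = 0 := by field_simp; ring
        rw [this]; positivity)
      (fun r _ => le_rfl) (by positivity)
    set M := ∫ r in Ioi (1 : ℝ), (u r) ^ 2 * r
    have e : 4 / j * 1 * (j / 2) = 2 := by field_simp; norm_num
    rw [e] at key
    have : 1 ≤ 16 * M / j ^ 2 := by
      have : (4 / j) ^ 2 * M = 16 * M / j ^ 2 := by ring
      linarith
    rw [le_div_iff₀ (by positivity)] at this
    linarith
  rw [abs_of_nonneg (by linarith), one_mul]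
  have : 4 * j ^ 2 / (8 - j) ^ 2 ≤ j ^ 2 / 16 + j ^ 3 := by
    rw [div_le_iff₀ (by nlinarith)]
    have h1 : 0 < j ^ 3 := by positivity
    have h2 : (j ^ 2 / 16 + j ^ 3) * (8 - j) ^ 2 - 4 * j ^ 2
        = j ^ 3 * ((8 - j) ^ 2 - 1 + j / 16) := by ring
    have h3 : 0 ≤ (8 - j) ^ 2 - 1 + j / 16 := by nlinarith
    have := mul_nonneg h1.le h3
    linarith
  linarith


def PP (x : ℝ) : ℝ := 1 - x - (1 / 2) * x ^ 2 - (5 / 6) * x ^ 3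
            - (43 / 24) * x ^ 4 - (529 / 120) * x ^ 5

lemma taylor_core {s : ℝ} (hs : 0 < s) (hs4 : s ≤ 1 / 4) :
    |exp (s / (1 - s)) * (1 - s) ^ 2 - PP (s - s ^ 2)| ≤ 2500 * s ^ 6 := by
  have h1 : 0 < 1 - s := by linarith
  set t := s / (1 - s) with ht
  have ht0 : 0 ≤ t := by positivity
  have ht1 : t ≤ 4 / 3 * s := by
    rw [ht, div_le_iff₀ h1]; nlinarith
  have hb := Real.exp_bound (x := t) (by rw [abs_of_nonneg ht0]; linarith) (n := 6) (by norm_num)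
  simp only [Finset.sum_range_succ, Finset.sum_range_zero, Nat.factorial] at hb
  rw [abs_of_nonneg ht0] at hb
  norm_num at hb
  set T := 1 + t + t ^ 2 / 2 + t ^ 3 / 6 + t ^ 4 / 24 + t ^ 5 / 120 with hT
  have hb2 : |exp t - T| ≤ 6 * s ^ 6 := by
    have : t ^ 6 ≤ (4 / 3 * s) ^ 6 := by gcongr
    have h6 : 0 ≤ s ^ 6 := by positivity
    have h7 : 0 ≤ t ^ 6 := by positivity
    rw [mul_pow] at this
    norm_num at this
    linarith
  have key : (T * (1 - s) ^ 2 - PP (s - s ^ 2)) * (1 - s) ^ 3 = s ^ 6 * (-1417/120 + 2909/40 * s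
      - 22699/120 * s ^ 2 + 6523/24 * s ^ 3 - 9373/40 * s ^ 4 + 14597/120 * s ^ 5
      - 529/15 * s ^ 6 + 529/120 * s ^ 7) := by
    rw [hT, ht]
    unfold PP
    field_simp
    ring
  have hp : ∀ n : ℕ, 0 ≤ s ^ n ∧ s ^ n ≤ 1 := fun n =>
    ⟨by positivity, pow_le_one₀ hs.le (by linarith)⟩
  have hR : |-1417/120 + 2909/40 * s
      - 22699/120 * s ^ 2 + 6523/24 * s ^ 3 - 9373/40 * s ^ 4 + 14597/120 * s ^ 5
      - 529/15 * s ^ 6 + 529/120 * s ^ 7| ≤ 942 := by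
    have a2 := hp 2
    have a3 := hp 3
    have a4 := hp 4
    have a5 := hp 5
    have a6 := hp 6
    have a7 := hp 7
    rw [abs_le]
    constructor <;> linarith
  have h3 : (27 : ℝ) / 64 ≤ (1 - s) ^ 3 := by
    have : ((3 : ℝ) / 4) ^ 3 ≤ (1 - s) ^ 3 := by gcongr; linarith
    norm_num at this
    linarith
  have hTP : |T * (1 - s) ^ 2 - PP (s - s ^ 2)| ≤ 2400 * s ^ 6 := by
    have e := congrArg abs key
    rw [abs_mul, abs_mul, abs_of_pos (by positivity : 0 < (1 - s) ^ 3),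
      abs_of_pos (by positivity : 0 < s ^ 6)] at e
    have l1 := mul_le_mul_of_nonneg_left hR (hp 6).1
    have l2 := mul_le_mul_of_nonneg_left h3 (abs_nonneg (T * (1 - s) ^ 2 - PP (s - s ^ 2)))
    have := (hp 6).1
    linarith
  have hsplit : exp t * (1 - s) ^ 2 - PP (s - s ^ 2)
      = (exp t - T) * (1 - s) ^ 2 + (T * (1 - s) ^ 2 - PP (s - s ^ 2)) := by ring
  rw [hsplit]
  refine (abs_add_le _ _).trans ?_
  have hq : (1 - s) ^ 2 ≤ 1 := pow_le_one₀ h1.le (by linarith)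
  have l : |(exp t - T) * (1 - s) ^ 2| ≤ 6 * s ^ 6 := by
    rw [abs_mul, abs_of_pos (by positivity : 0 < (1 - s) ^ 2)]
    calc _ ≤ |exp t - T| * 1 := by gcongr
      _ ≤ _ := by linarith
  have := (hp 6).1
  linarith

lemma PP_lip {x y : ℝ} (hx : 0 ≤ x) (hx1 : x ≤ 1) (hy : 0 ≤ y) (hy1 : y ≤ 1) :
    |PP x - PP y| ≤ 34 * |x - y| := by
  have e : PP x - PP y = (x - y) * -(1 + 1 / 2 * (x + y) + 5 / 6 * (x ^ 2 + x * y + y ^ 2)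
      + 43 / 24 * (x ^ 3 + x ^ 2 * y + x * y ^ 2 + y ^ 3)
      + 529 / 120 * (x ^ 4 + x ^ 3 * y + x ^ 2 * y ^ 2 + x * y ^ 3 + y ^ 4)) := by
    unfold PP; ring
  rw [e, abs_mul, mul_comm, abs_neg]
  apply mul_le_mul_of_nonneg_right _ (abs_nonneg _)
  have hp : ∀ m n : ℕ, x ^ m * y ^ n ≤ 1 := fun m n =>
    mul_le_one₀ (pow_le_one₀ hx hx1) (by positivity) (pow_le_one₀ hy hy1)
  rw [abs_of_nonneg (by positivity)]
  have b1 := hp 2 0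
  have b2 := hp 1 1
  have b3 := hp 0 2
  have c1 := hp 3 0
  have c2 := hp 2 1
  have c3 := hp 1 2
  have c4 := hp 0 3
  have d1 := hp 4 0
  have d2 := hp 3 1
  have d3 := hp 2 2
  have d4 := hp 1 3
  have d5 := hp 0 4
  simp only [pow_zero, pow_one, mul_one, one_mul] at *
  linarith

lemma core {C s y l : ℝ} (hC : 0 < C) (hs : 0 < s) (hs4 : s ≤ 1 / 4) (hsC : (4 + C) * s ≤ 1)
    (hy : 0 < y) (hy1 : y ≤ s ^ 14) (hl : |1 / s - l| ≤ C * s ^ 7) :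
    |exp (1 / (y + s - s ^ 2) - 1 - l) * ((y + s - s ^ 2) ^ 2 / (s ^ 2 - y)) - PP (y + s - s ^ 2)|
      ≤ (64 * (54 * (4 + C) + 2558)) * (y + s - s ^ 2) ^ 6 := by
  have h1 : 0 < 1 - s := by linarith
  set d := y + s - s ^ 2 with hd
  have hpl : ∀ n m : ℕ, n ≤ m → s ^ m ≤ s ^ n := fun n m h =>
    pow_le_pow_of_le_one hs.le (by linarith) h
  have hp1 : ∀ n : ℕ, 0 < s ^ n := fun n => by positivity
  have hd0 : s / 2 ≤ s - s ^ 2 := by nlinarith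
  have hdd : s / 2 ≤ d := by linarith
  have hdpos : 0 < d := by linarith
  have hy3 : y ≤ s ^ 3 := hy1.trans (hpl 3 14 (by norm_num))
  have hy3' : s ^ 3 ≤ s ^ 2 / 4 := by
    have : s ^ 3 = s ^ 2 * s := by ring
    nlinarith [hp1 2]
  have hd1 : d ≤ 1 := by nlinarith [hp1 2]
  have hy1' : y ≤ 1 := by nlinarith [hp1 2]
  set t := s / (1 - s) with ht
  have ht0 : 0 ≤ t := by positivity
  have ht1 : t ≤ 1 := by
    rw [ht, div_le_iff₀ h1]; linarith
  set A := 1 / d - 1 - l with hA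
  have hAt : |A - t| ≤ (4 + C) * s ^ 7 := by
    have e : A - t = -(y / (d * (s - s ^ 2))) + (1 / s - l) := by
      have e1 : t = 1 / (s - s ^ 2) - 1 - 1 / s := by
        rw [ht, show s - s ^ 2 = s * (1 - s) by ring]
        field_simp
        ring
      have h2 : 0 < s - s ^ 2 := by linarith
      have e2 : y / (d * (s - s ^ 2)) = 1 / (s - s ^ 2) - 1 / d := by
        rw [div_sub_div _ _ h2.ne' hdpos.ne', mul_comm d]
        congr 1
        rw [hd]; ring
      rw [e1, e2, hA]; ring
    rw [e]
    refine (abs_add_le _ _).trans ?_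
    have h2 : y / (d * (s - s ^ 2)) ≤ 4 * s ^ 12 := by
      have h3 : s / 2 * (s / 2) ≤ d * (s - s ^ 2) := by gcongr
      rw [div_le_iff₀ (by nlinarith)]
      have h4 := mul_le_mul_of_nonneg_left h3 (by positivity : 0 ≤ 4 * s ^ 12)
      have h5 : 4 * s ^ 12 * (s / 2 * (s / 2)) = s ^ 14 := by ring
      linarith
    have h3 : 0 ≤ y / (d * (s - s ^ 2)) := by
      apply div_nonneg hy.le
      apply mul_nonneg hdpos.le
      linarith
    rw [abs_neg, abs_of_nonneg h3]
    have := hpl 7 12 (by norm_num)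
    linarith
  have hAt1 : |A - t| ≤ 1 := by
    have h6 : s ^ 6 ≤ 1 := pow_le_one₀ hs.le (by linarith)
    have : (4 + C) * s ^ 7 = (4 + C) * s * s ^ 6 := by ring
    have := mul_le_mul hsC h6 (hp1 6).le one_pos.le
    linarith
  have het : exp t ≤ 3 := by
    have := exp_le_exp.2 ht1
    have := Real.exp_one_lt_d9
    linarith
  have heA : |exp A - exp t| ≤ 6 * ((4 + C) * s ^ 6) := by
    have h2 := Real.abs_exp_sub_one_le hAt1
    have e : exp A - exp t = exp t * (exp (A - t) - 1) := by
      rw [mul_sub, ← exp_add]; ring_nf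
    rw [e, abs_mul, abs_of_pos (exp_pos t)]
    have h7 := mul_le_mul_of_nonneg_left (hpl 6 7 (by norm_num)) (by positivity : 0 ≤ 4 + C)
    calc exp t * |exp (A - t) - 1| ≤ 3 * (2 * ((4 + C) * s ^ 6)) := by
          gcongr
          linarith
      _ = _ := by ring
  set Q := d ^ 2 / (s ^ 2 - y) with hQ
  have hsy : s ^ 2 / 2 ≤ s ^ 2 - y := by nlinarith [hp1 2]
  have hsy0 : 0 < s ^ 2 - y := by nlinarith [hp1 2]
  have hQd : |Q - (1 - s) ^ 2| ≤ 8 * s ^ 6 := by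
    have e : Q - (1 - s) ^ 2 = y * (2 * (s - s ^ 2) + y + (1 - s) ^ 2) / (s ^ 2 - y) := by
      rw [hQ, eq_div_iff hsy0.ne', sub_mul, div_mul_cancel₀ _ hsy0.ne', hd]
      ring
    have h0 : 0 ≤ 2 * (s - s ^ 2) + y + (1 - s) ^ 2 := by nlinarith
    have h4 : 2 * (s - s ^ 2) + y + (1 - s) ^ 2 ≤ 4 := by nlinarith
    rw [e, abs_of_nonneg (by positivity), div_le_iff₀ hsy0]
    have h5 := mul_le_mul_of_nonneg_left h4 hy.le
    have h6 := mul_le_mul_of_nonneg_left hsy (by positivity : 0 ≤ 8 * s ^ 6)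
    have h7 : 8 * s ^ 6 * (s ^ 2 / 2) = 4 * s ^ 8 := by ring
    have h8 := hpl 8 14 (by norm_num)
    linarith
  have hQ9 : |Q| ≤ 9 := by
    have h6 : s ^ 6 ≤ 1 := pow_le_one₀ hs.le (by linarith)
    have hq : (1 - s) ^ 2 ≤ 1 := pow_le_one₀ h1.le (by linarith)
    have hq0 : 0 ≤ (1 - s) ^ 2 := by positivity
    rw [abs_le] at *
    constructor <;> linarith
  have hT := taylor_core hs hs4
  have hL : |PP d - PP (s - s ^ 2)| ≤ 34 * s ^ 6 := by
    have h2 := PP_lip hdpos.le hd1 (by linarith : 0 ≤ s - s ^ 2) (by nlinarith)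
    have e : d - (s - s ^ 2) = y := by rw [hd]; ring
    rw [e, abs_of_pos hy] at h2
    have h8 := hpl 6 14 (by norm_num)
    linarith
  have split : exp A * Q - PP d = (exp A - exp t) * Q + exp t * (Q - (1 - s) ^ 2)
      + (exp t * (1 - s) ^ 2 - PP (s - s ^ 2)) - (PP d - PP (s - s ^ 2)) := by ring
  have hfin : |exp A * Q - PP d| ≤ (54 * (4 + C) + 2558) * s ^ 6 := by
    rw [split]
    have b1 : |(exp A - exp t) * Q| ≤ 54 * (4 + C) * s ^ 6 := by
      rw [abs_mul]
      calc _ ≤ 6 * ((4 + C) * s ^ 6) * 9 := by gcongr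
        _ = _ := by ring
    have b2 : |exp t * (Q - (1 - s) ^ 2)| ≤ 24 * s ^ 6 := by
      rw [abs_mul, abs_of_pos (exp_pos t)]
      calc _ ≤ 3 * (8 * s ^ 6) := by gcongr
        _ = _ := by ring
    rw [abs_le] at *
    constructor <;> linarith
  have hsd : s ^ 6 ≤ 64 * d ^ 6 := by
    have : s ^ 6 ≤ (2 * d) ^ 6 := by gcongr; linarith
    rw [mul_pow] at this
    norm_num at this
    exact this
  calc _ ≤ _ := hfin
    _ ≤ (54 * (4 + C) + 2558) * (64 * d ^ 6) := by gcongr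
    _ = _ := by ring

lemma gam_pos : 0 < eulerMascheroniConstant := by
  have := Real.one_half_lt_eulerMascheroniConstant
  linarith

lemma ratio_asymp : ∃ C y0 : ℝ, 0 < C ∧ 0 < y0 ∧ y0 ≤ 1 ∧ ∀ y, 0 < y → y ≤ y0 →
    |1 / (aa y / bb y) - (-log y - 2 * eulerMascheroniConstant)| ≤ C * √y := by
  obtain ⟨Ca, hCa, ha⟩ := aa_asymp
  obtain ⟨Cc, hCc, hc⟩ := cc_asymp
  set g := eulerMascheroniConstant with hg
  have hg0 : 0 < g := gam_pos
  refine ⟨4 * (Cc + g * Ca), min 1 ((1 / (2 * Ca)) ^ 2), by positivity, by positivity,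
    min_le_left _ _, fun y hy hy0 => ?_⟩
  have h1 := ha y hy
  have h2 := hc y hy
  have hs : √y ≤ 1 / (2 * Ca) := by
    rw [Real.sqrt_le_left (by positivity)]
    exact hy0.trans (min_le_right _ _)
  have h3 : Ca * √y ≤ 1 / 2 := by
    calc Ca * √y ≤ Ca * (1 / (2 * Ca)) := by gcongr
      _ = 1 / 2 := by field_simp
  have ha2 : 1 / 2 ≤ aa y := by
    rw [abs_le] at h1; linarith
  have hap := aa_pos hy
  have hbp := bb_pos hy
  have e : 1 / (aa y / bb y) - (-log y - 2 * g)
      = 2 * ((cc y + g) + g * (aa y - 1)) / aa y := by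
    rw [one_div_div, bb_eq hy]
    field_simp
    ring
  rw [e, abs_div, abs_of_pos hap, div_le_iff₀ hap]
  have h4 : |2 * ((cc y + g) + g * (aa y - 1))| ≤ 2 * ((Cc + g * Ca) * √y) := by
    rw [abs_mul, abs_of_pos (by norm_num : (0:ℝ) < 2)]
    gcongr
    refine (abs_add_le _ _).trans ?_
    rw [abs_mul, abs_of_pos hg0]
    have := mul_le_mul_of_nonneg_left h1 hg0.le
    linarith
  have h5 : 0 ≤ (Cc + g * Ca) * √y := by positivity
  nlinarith

lemma ratio_lim : Tendsto (fun y => aa y / bb y) (𝓝[>] 0) (𝓝 0) := by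
  obtain ⟨C, y0, hC, hy0, hy01, h⟩ := ratio_asymp
  have h1 : Tendsto (fun y => 1 / (aa y / bb y)) (𝓝[>] 0) atTop := by
    have h2 : Tendsto (fun y : ℝ => -log y + (- 2 * eulerMascheroniConstant - C))
        (𝓝[>] 0) atTop :=
      tendsto_atTop_add_const_right _ _ (tendsto_neg_atBot_atTop.comp Real.tendsto_log_nhdsGT_zero)
    refine tendsto_atTop_mono' _ ?_ h2
    filter_upwards [Ioc_mem_nhdsGT hy0] with y hy
    have h3 := h y hy.1 hy.2
    have h4 : √y ≤ 1 := Real.sqrt_le_one.2 (hy.2.trans hy01)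
    have h5 := mul_le_mul_of_nonneg_left h4 hC.le
    rw [abs_le] at h3
    linarith
  have := h1.inv_tendsto_atTop
  simpa [Pi.inv_def] using this

lemma exp_neg_inv_le {s : ℝ} (hs : 0 < s) : exp (-(1 / s)) ≤ (Nat.factorial 16 : ℕ) * s ^ 16 := by
  have h := Real.pow_div_factorial_le_exp (1 / s) (by positivity) 16
  rw [exp_neg]
  have h3 := inv_anti₀ (by positivity) h
  refine h3.trans (le_of_eq ?_)
  rw [inv_div, div_pow, one_pow, div_div_eq_mul_div, div_one]

lemma part1 : ∃ C : ℝ, 0 < C ∧ ∃ j₀ : ℝ, 0 < j₀ ∧ ∀ j : ℝ, j₀ ≤ j →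
      |1 / mu j - 4 * j * exp (1 - 2 * eulerMascheroniConstant - j) * PP j⁻¹| ≤
        C * (4 * j * exp (1 - 2 * eulerMascheroniConstant - j)) * j⁻¹ ^ 6 := by
  obtain ⟨C, y0, hC, hy0, hy01, hR⟩ := ratio_asymp
  set D := √(exp C * (Nat.factorial 16 : ℕ)) with hD
  have hD2 : D ^ 2 = exp C * (Nat.factorial 16 : ℕ) := Real.sq_sqrt (by positivity)
  have hDp : 0 < D := by positivity
  set s0 : ℝ := min (1 / 4) (min (1 / (4 + C)) (1 / D)) with hs0
  have hs0p : 0 < s0 := by positivity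
  have hev : ∀ᶠ y in 𝓝[>] (0:ℝ), aa y / bb y < s0 := ratio_lim.eventually (gt_mem_nhds hs0p)
  obtain ⟨y1, hy1p, hy1⟩ := (mem_nhdsGT_iff_exists_Ioc_subset).1 hev
  have hy1p : 0 < y1 := hy1p
  set y2 := min y0 y1 with hy2
  have hy2p : 0 < y2 := lt_min hy0 hy1p
  set h : ℝ → ℝ := fun y => y + aa y / bb y - (aa y / bb y) ^ 2 with hh
  have hcont : ∀ y, 0 < y → ContinuousAt h y := by
    intro y hy
    have c1 := (aa_deriv hy).continuousAt
    have c2 := (bb_deriv hy).continuousAt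
    have c3 := c1.div c2 (bb_pos hy).ne'
    exact (continuousAt_id.add c3).sub (c3.pow 2)
  have hlim : Tendsto h (𝓝[>] 0) (𝓝 0) := by
    have t0 : Tendsto (fun y : ℝ => y) (𝓝[>] 0) (𝓝 0) := tendsto_id.mono_left nhdsWithin_le_nhds
    have := (t0.add ratio_lim).sub (ratio_lim.pow 2)
    simpa using this
  have hsm : ∀ y, 0 < y → y ≤ y2 → 0 < aa y / bb y ∧ aa y / bb y ≤ s0 := by
    intro y hy hyy
    exact ⟨div_pos (aa_pos hy) (bb_pos hy), le_of_lt (hy1 ⟨hy, hyy.trans (min_le_right _ _)⟩)⟩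
  have hh2 : 0 < h y2 := by
    obtain ⟨p1, p2⟩ := hsm y2 hy2p le_rfl
    have p3 : s0 ≤ 1 / 4 := min_le_left _ _
    simp only [hh]
    nlinarith
  refine ⟨64 * (54 * (4 + C) + 2558), by positivity, 1 / h y2, by positivity, fun j hj => ?_⟩
  have hjp : 0 < j := lt_of_lt_of_le (by positivity) hj
  have hj2 : 1 / j ≤ h y2 := by
    rw [div_le_iff₀ hh2] at hj
    rw [div_le_iff₀ hjp]; linarith
  obtain ⟨y, hyp, hyy, hyj⟩ : ∃ y, 0 < y ∧ y ≤ y2 ∧ h y = 1 / j := by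
    have e1 : ∀ᶠ y in 𝓝[>] (0:ℝ), h y < 1 / j := hlim.eventually (gt_mem_nhds (by positivity))
    have e2 : ∀ᶠ y in 𝓝[>] (0:ℝ), y ∈ Ioc 0 y2 := Ioc_mem_nhdsGT hy2p
    obtain ⟨y3, hy3, hy3'⟩ := (e1.and e2).exists
    have := intermediate_value_Icc hy3'.2 (f := h)
      (fun x hx => (hcont x (lt_of_lt_of_le hy3'.1 hx.1)).continuousWithinAt)
    obtain ⟨y, hy, hyj⟩ := this ⟨hy3.le, hj2⟩
    exact ⟨y, lt_of_lt_of_le hy3'.1 hy.1, hy.2, hyj⟩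
  obtain ⟨hs, hss⟩ := hsm y hyp hyy
  have hr := hR y hyp (hyy.trans (min_le_left _ _))
  have hap := aa_pos hyp
  have hbp := bb_pos hyp
  have hFF : FF y = bb y ^ 2 * h y := by
    simp only [hh]; unfold FF
    field_simp
    ring
  have hGG : GG y = bb y ^ 2 * ((aa y / bb y) ^ 2 - y) := by
    unfold GG
    field_simp
  have hmu := mu_eq hyp hjp (by rw [hFF, hyj]; field_simp)
  rw [hFF, hGG] at hmu
  simp only [hh] at hmu hyj
  set s := aa y / bb y with hsdef
  set g := eulerMascheroniConstant with hg
  have hgp : 0 < g := gam_pos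
  set l := -log y - 2 * g with hl
  have hs4 : s ≤ 1 / 4 := hss.trans (min_le_left _ _)
  have hsC : (4 + C) * s ≤ 1 := by
    have := hss.trans ((min_le_right _ _).trans (min_le_left _ _))
    rw [le_div_iff₀ (by positivity)] at this
    linarith
  have hsD : D * s ≤ 1 := by
    have := hss.trans ((min_le_right _ _).trans (min_le_right _ _))
    rw [le_div_iff₀ (by positivity)] at this
    linarith
  have hyl : y = exp (-l - 2 * g) := by
    rw [hl, show -(-log y - 2 * g) - 2 * g = log y by ring, exp_log hyp]
  have hyy1 : y ≤ 1 := hyy.trans ((min_le_left _ _).trans hy01)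
  have hsq1 : √y ≤ 1 := Real.sqrt_le_one.2 hyy1
  have hyD : y ≤ (D * s ^ 8) ^ 2 := by
    have h1 : 1 / s - l ≤ C := by
      have := mul_le_mul_of_nonneg_left hsq1 hC.le
      have := le_abs_self (1 / s - l)
      linarith
    calc y ≤ exp (C + -(1 / s)) := by
          rw [hyl]; apply exp_le_exp.2; linarith
      _ = exp C * exp (-(1 / s)) := exp_add _ _
      _ ≤ exp C * ((Nat.factorial 16 : ℕ) * s ^ 16) := by
          gcongr
          exact exp_neg_inv_le hs
      _ = (D * s ^ 8) ^ 2 := by rw [mul_pow, hD2]; ring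
  have hDs : D * s ^ 8 ≤ s ^ 7 := by
    calc D * s ^ 8 = D * s * s ^ 7 := by ring
      _ ≤ 1 * s ^ 7 := by gcongr
      _ = _ := one_mul _
  have hy14 : y ≤ s ^ 14 := by
    calc y ≤ _ := hyD
      _ ≤ (s ^ 7) ^ 2 := by gcongr
      _ = _ := by ring
  have hsqy : √y ≤ s ^ 7 := by
    rw [Real.sqrt_le_left (by positivity)]
    calc y ≤ _ := hy14
      _ = _ := by ring
  have hl7 : |1 / s - l| ≤ C * s ^ 7 := by
    have := mul_le_mul_of_nonneg_left hsqy hC.le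
    linarith
  have hcore := core hC hs hs4 hsC hyp hy14 hl7
  rw [hyj] at hcore hmu
  have hsy : 0 < s ^ 2 - y := by
    have : s ^ 14 ≤ s ^ 3 := pow_le_pow_of_le_one hs.le (by linarith) (by norm_num)
    have h3 : s ^ 3 = s ^ 2 * s := by ring
    have : 0 < s ^ 2 := by positivity
    nlinarith
  have hinv : 1 / mu j = 4 * j * exp (1 - 2 * g - j) *
      (exp (1 / (1 / j) - 1 - l) * ((1 / j) ^ 2 / (s ^ 2 - y))) := by
    have e1 : exp (1 - 2 * g - j) * exp (1 / (1 / j) - 1 - l) = y := by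
      rw [← exp_add, hyl, one_div_one_div]; congr 1; ring
    have e2 : 1 / mu j = 4 * j * y * ((1 / j) ^ 2 / (s ^ 2 - y)) := by
      rw [hmu]
      field_simp
    rw [e2, ← e1]; ring
  rw [hinv, ← mul_sub, abs_mul, abs_of_pos (by positivity : 0 < 4 * j * exp (1 - 2 * g - j))]
  rw [one_div j] at hcore ⊢
  calc _ ≤ 4 * j * exp (1 - 2 * g - j) * (64 * (54 * (4 + C) + 2558) * j⁻¹ ^ 6) := by gcongr
    _ = _ := by ring


/-- Asymptotic expansions of `μ`: as `j → ∞`,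
`1/μ(j) = 4 j e^{1-2γ-j} (1 - j⁻¹ - j⁻²/2 - 5j⁻³/6 - 43j⁻⁴/24 - 529j⁻⁵/120 + O(j⁻⁶))`,
and as `j → 0+`, `μ(j) = j²/16 + O(j³)`. -/
theorem mu_asymptotics :
    (∃ C : ℝ, 0 < C ∧ ∃ j₀ : ℝ, 0 < j₀ ∧ ∀ j : ℝ, j₀ ≤ j →
      |1 / mu j -
        4 * j * exp (1 - 2 * eulerMascheroniConstant - j) *
          (1 - j⁻¹ - (1 / 2) * j⁻¹ ^ 2 - (5 / 6) * j⁻¹ ^ 3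
            - (43 / 24) * j⁻¹ ^ 4 - (529 / 120) * j⁻¹ ^ 5)| ≤
        C * (4 * j * exp (1 - 2 * eulerMascheroniConstant - j)) * j⁻¹ ^ 6) ∧
    (∃ C : ℝ, 0 < C ∧ ∃ j₁ : ℝ, 0 < j₁ ∧ ∀ j : ℝ, 0 < j → j ≤ j₁ →
      |mu j - j ^ 2 / 16| ≤ C * j ^ 3) := by
  exact ⟨part1, part2⟩
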